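/- There exist constants ε₀ ∈ (0,1) and C > 0 with the following property. Let ν ∈ (0,1], k ∈ ℤ with |k| ≥ 1 and νk² ≥ 1, ε ∈ [0, ε₀], and λ ∈ ℝ. Let φ : [−1,1] → ℂ be four times continuously differentiable with φ(±1) = 0 and φ'(±1) = 0; set w = φ'' − k²φ, F(y) = −ν(w''(y) − k²w(y)) + ik(y−λ)w(y) − ε·ν^{1/3}|k|^{2/3}w(y), and ‖u‖_{L²} = (‖φ'‖_{L²}² + k²‖φ‖_{L²}²)^{1/2}. Then: (i) νk²‖w‖_{L²} ≤ C‖F‖_{L²} (in particular ν^{5/12}|k|^{5/6}‖w‖_{L²} ≤ C‖F‖_{L²}); and (ii) if M ≥ 0 dominates F in H^{−1}, then νk²‖u‖_{L²} ≤ C·M and ν|k|·‖w‖_{L²} ≤ C·M. -/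

import Mathlib

/-- The `L²` norm of a function on the interval `[-1,1]`. -/
noncomputable def nL2 (f : ℝ → ℂ) : ℝ :=
  (∫ y in Set.Icc (-1:ℝ) 1, ‖f y‖ ^ 2) ^ ((1:ℝ)/2)

/-- The `L²` pairing of two functions on the interval `[-1,1]`. -/
noncomputable def innI (f g : ℝ → ℂ) : ℂ :=
  ∫ y in Set.Icc (-1:ℝ) 1, f y * (starRingEnd ℂ) (g y)

/-- `M ≥ 0` dominates `F` in `H^{-1}` : `|⟨F, φ⟩| ≤ M ‖φ‖_{H¹}` for every `C¹` function
vanishing at `±1`. -/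
def Dominates (F : ℝ → ℂ) (M : ℝ) : Prop :=
  ∀ g : ℝ → ℂ, ContDiff ℝ 1 g → g (-1) = 0 → g 1 = 0 →
    ‖innI F g‖ ≤ M * ((nL2 g ^ 2 + nL2 (deriv g) ^ 2) ^ ((1:ℝ)/2))

open MeasureTheory in
lemma aux_ftc (G G' : ℝ → ℂ) (h : ∀ y, HasDerivAt G (G' y) y) (hc : Continuous G')
    (h0 : G (-1) = 0) (h1 : G 1 = 0) : ∫ y in Set.Icc (-1:ℝ) 1, (G' y).re = 0 := by
  have e : ∫ y in (-1:ℝ)..1, G' y = 0 := by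
    rw [intervalIntegral.integral_eq_sub_of_hasDerivAt (fun y _ => h y)
      (hc.intervalIntegrable _ _), h0, h1, sub_zero]
  rw [intervalIntegral.integral_of_le (by norm_num), ← integral_Icc_eq_integral_Ioc] at e
  have := integral_re (𝕜 := ℂ) (μ := volume.restrict (Set.Icc (-1:ℝ) 1)) (f := G')
    (hc.integrableOn_Icc)
  simp only [RCLike.re_eq_complex_re] at this
  rw [this, e]; rfl

lemma aux_conj {f : ℝ → ℂ} {f' : ℂ} {y : ℝ} (h : HasDerivAt f f' y) :
    HasDerivAt (fun y => (starRingEnd ℂ) (f y)) ((starRingEnd ℂ) f') y := h.star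

lemma aux_nsq (f : ℝ → ℂ) : nL2 f ^ 2 = ∫ y in Set.Icc (-1:ℝ) 1, ‖f y‖ ^ 2 := by
  unfold nL2
  rw [← Real.sqrt_eq_rpow, Real.sq_sqrt]
  exact MeasureTheory.integral_nonneg fun y => by positivity

lemma aux_nn (f : ℝ → ℂ) : 0 ≤ nL2 f := by
  unfold nL2
  exact Real.rpow_nonneg (MeasureTheory.integral_nonneg fun y => by positivity) _

lemma aux_pt1 (a b d : ℂ) (c : ℝ) :
    c^2 * (‖b‖^2 + c^2 * ‖a‖^2) ≤ ‖d - (c:ℂ)^2 * a‖^2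
      + 2 * c^2 * (d * (starRingEnd ℂ) a + b * (starRingEnd ℂ) b).re := by
  have h : 0 ≤ Complex.normSq d := Complex.normSq_nonneg d
  simp only [← Complex.normSq_eq_norm_sq, Complex.normSq_apply, ← Complex.ofReal_pow,
    Complex.sub_re, Complex.sub_im, Complex.re_ofReal_mul, Complex.im_ofReal_mul,
    Complex.add_re, Complex.mul_re, Complex.conj_re, Complex.conj_im, Complex.ofReal_re,
    Complex.ofReal_im] at *
  have := mul_nonneg (sq_nonneg c) (add_nonneg (mul_self_nonneg b.re) (mul_self_nonneg b.im))
  nlinarith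

lemma aux_pt2 (a b d W W2 : ℂ) (c ν δ y lam : ℝ) (hW : W = d - (c:ℂ)^2 * a) :
    ν * ‖W‖^2 ≤ (δ + 1/2) * (‖b‖^2 + c^2 * ‖a‖^2)
      - ((-(ν : ℂ) * (W2 - (c:ℂ)^2 * W) + Complex.I * (c:ℂ) * ((y:ℂ) - (lam:ℂ)) * W
            - (δ : ℂ) * W) * (starRingEnd ℂ) a).re
      + (-(ν:ℂ) * (W2 * (starRingEnd ℂ) a - W * (starRingEnd ℂ) d)
        + Complex.I * (c:ℂ) * (b * (starRingEnd ℂ) a)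
        + Complex.I * (c:ℂ) * ((y:ℂ) - (lam:ℂ)) * (d * (starRingEnd ℂ) a + b * (starRingEnd ℂ) b)
        - (δ:ℂ) * (d * (starRingEnd ℂ) a + b * (starRingEnd ℂ) b)).re := by
  have h1 := sq_nonneg (b.im - c * a.re)
  have h2 := sq_nonneg (b.re + c * a.im)
  subst hW
  simp only [← Complex.normSq_eq_norm_sq, Complex.normSq_apply, ← Complex.ofReal_pow,
    Complex.sub_re, Complex.sub_im, Complex.re_ofReal_mul, Complex.im_ofReal_mul,
    Complex.add_re, Complex.add_im, Complex.mul_re, Complex.mul_im, Complex.conj_re,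
    Complex.conj_im, Complex.neg_re, Complex.neg_im, Complex.I_re, Complex.I_im,
    Complex.ofReal_re, Complex.ofReal_im]
  nlinarith

lemma aux_pt3 (f a : ℂ) (t : ℝ) (ht : 0 < t) :
    -(f * (starRingEnd ℂ) a).re ≤ (1 / (2 * t)) * ‖f‖^2 + t / 2 * ‖a‖^2 := by
  have h1 : -(f * (starRingEnd ℂ) a).re ≤ ‖f‖ * ‖a‖ := by
    have := Complex.abs_re_le_norm (f * (starRingEnd ℂ) a)
    rw [norm_mul, RCLike.norm_conj] at this
    exact (neg_le_abs _).trans this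
  refine h1.trans ?_
  have : (1 / (2 * t)) * ‖f‖^2 + t / 2 * ‖a‖^2 - ‖f‖ * ‖a‖
    = (1 / (2 * t)) * (‖f‖ - t * ‖a‖)^2 := by field_simp; ring
  have h2 : 0 ≤ (1 / (2 * t)) * (‖f‖ - t * ‖a‖)^2 := by positivity
  linarith

open MeasureTheory in
lemma aux_core (ν c δ lam : ℝ) (φ φ1 φ2 w w1 w2 F : ℝ → ℂ)
    (h0 : ∀ y, HasDerivAt φ (φ1 y) y) (h1 : ∀ y, HasDerivAt φ1 (φ2 y) y)
    (hw0 : ∀ y, HasDerivAt w (w1 y) y) (hw1 : ∀ y, HasDerivAt w1 (w2 y) y)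
    (c2 : Continuous φ2) (cw2 : Continuous w2)
    (b1 : φ (-1) = 0) (b2 : φ 1 = 0) (b3 : φ1 (-1) = 0) (b4 : φ1 1 = 0)
    (hw : ∀ y, w y = φ2 y - (c:ℂ)^2 * φ y)
    (hF : ∀ y, F y = -(ν : ℂ) * (w2 y - (c:ℂ)^2 * w y)
            + Complex.I * (c:ℂ) * ((y:ℂ) - (lam:ℂ)) * w y - (δ : ℂ) * w y) :
    c^2 * (nL2 φ1 ^ 2 + c^2 * nL2 φ ^ 2) ≤ nL2 w ^ 2 ∧
    ν * nL2 w ^ 2 ≤ (δ + 1/2) * (nL2 φ1 ^ 2 + c^2 * nL2 φ ^ 2) - (innI F φ).re ∧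
    ∀ t : ℝ, 0 < t → -(innI F φ).re ≤ (1 / (2 * t)) * nL2 F ^ 2 + t / 2 * nL2 φ ^ 2 := by
  have c0 : Continuous φ := continuous_iff_continuousAt.2 fun y => (h0 y).continuousAt
  have c1 : Continuous φ1 := continuous_iff_continuousAt.2 fun y => (h1 y).continuousAt
  have cw : Continuous w := continuous_iff_continuousAt.2 fun y => (hw0 y).continuousAt
  have cF : Continuous F := by
    rw [show F = _ from funext hF]; fun_prop
  have cc0 : Continuous fun y => (starRingEnd ℂ) (φ y) := Complex.continuous_conj.comp c0
  have cc1 : Continuous fun y => (starRingEnd ℂ) (φ1 y) := Complex.continuous_conj.comp c1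
  have cc2 : Continuous fun y => (starRingEnd ℂ) (φ2 y) := Complex.continuous_conj.comp c2
  have cIm : Continuous fun y => (F y * (starRingEnd ℂ) (φ y)).re :=
    Complex.continuous_re.comp (cF.mul cc0)
  have hre : (innI F φ).re = ∫ y in Set.Icc (-1:ℝ) 1, (F y * (starRingEnd ℂ) (φ y)).re := by
    have := integral_re (𝕜 := ℂ) (μ := volume.restrict (Set.Icc (-1:ℝ) 1))
      (f := fun y => F y * (starRingEnd ℂ) (φ y)) ((cF.mul cc0).integrableOn_Icc)
    simp only [RCLike.re_eq_complex_re] at this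
    rw [this]; rfl
  -- first total derivative
  set H : ℝ → ℂ := fun y => φ2 y * (starRingEnd ℂ) (φ y) + φ1 y * (starRingEnd ℂ) (φ1 y) with hH
  have cH : Continuous H := by rw [hH]; fun_prop
  have dH : ∀ y, HasDerivAt (fun y => φ1 y * (starRingEnd ℂ) (φ y)) (H y) y := fun y =>
    (h1 y).mul (aux_conj (h0 y))
  have iH := aux_ftc _ H dH cH (by simp [b1]) (by simp [b2])
  set G : ℝ → ℂ := fun y => -(ν:ℂ) * (w2 y * (starRingEnd ℂ) (φ y) - w y * (starRingEnd ℂ) (φ2 y))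
        + Complex.I * (c:ℂ) * (φ1 y * (starRingEnd ℂ) (φ y))
        + Complex.I * (c:ℂ) * ((y:ℂ) - (lam:ℂ)) *
          (φ2 y * (starRingEnd ℂ) (φ y) + φ1 y * (starRingEnd ℂ) (φ1 y))
        - (δ:ℂ) * (φ2 y * (starRingEnd ℂ) (φ y) + φ1 y * (starRingEnd ℂ) (φ1 y)) with hG
  have cG : Continuous G := by rw [hG]; fun_prop
  have dG : ∀ y, HasDerivAt (fun y : ℝ => -(ν:ℂ) * (w1 y * (starRingEnd ℂ) (φ y)
      - w y * (starRingEnd ℂ) (φ1 y))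
      + (Complex.I * (c:ℂ) * ((y:ℂ) - (lam:ℂ))) * (φ1 y * (starRingEnd ℂ) (φ y))
      - (δ:ℂ) * (φ1 y * (starRingEnd ℂ) (φ y))) (G y) y := by
    intro y
    have hy : HasDerivAt (fun y : ℝ => Complex.I * (c:ℂ) * ((y:ℂ) - (lam:ℂ)))
        (Complex.I * (c:ℂ) * 1) y :=
      ((HasDerivAt.ofReal_comp (hasDerivAt_id y)).sub_const _).const_mul _
    have := ((((hw1 y).mul (aux_conj (h0 y))).sub ((hw0 y).mul (aux_conj (h1 y)))).const_mul
      (-(ν:ℂ))).add (hy.mul (dH y)) |>.sub ((dH y).const_mul (δ:ℂ))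
    refine this.congr_deriv ?_
    simp only [hG, hH]; ring
  have iG := aux_ftc _ G dG cG (by simp [b1, b3]) (by simp [b2, b4])
  have I0 : IntegrableOn (fun y => ‖φ y‖^2) (Set.Icc (-1:ℝ) 1) :=
    (c0.norm.pow 2).integrableOn_Icc
  have I1 : IntegrableOn (fun y => ‖φ1 y‖^2) (Set.Icc (-1:ℝ) 1) :=
    (c1.norm.pow 2).integrableOn_Icc
  have Iw : IntegrableOn (fun y => ‖w y‖^2) (Set.Icc (-1:ℝ) 1) :=
    (cw.norm.pow 2).integrableOn_Icc
  have IF : IntegrableOn (fun y => ‖F y‖^2) (Set.Icc (-1:ℝ) 1) :=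
    (cF.norm.pow 2).integrableOn_Icc
  have IH : IntegrableOn (fun y => (H y).re) (Set.Icc (-1:ℝ) 1) :=
    (Complex.continuous_re.comp cH).integrableOn_Icc
  have IG : IntegrableOn (fun y => (G y).re) (Set.Icc (-1:ℝ) 1) :=
    (Complex.continuous_re.comp cG).integrableOn_Icc
  have IFp : IntegrableOn (fun y => (F y * (starRingEnd ℂ) (φ y)).re) (Set.Icc (-1:ℝ) 1) :=
    cIm.integrableOn_Icc
  have IS : IntegrableOn (fun y => ‖φ1 y‖^2 + c^2 * ‖φ y‖^2) (Set.Icc (-1:ℝ) 1) :=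
    I1.add (I0.const_mul _)
  have eS : ∫ y in Set.Icc (-1:ℝ) 1, (‖φ1 y‖^2 + c^2 * ‖φ y‖^2)
      = nL2 φ1 ^ 2 + c^2 * nL2 φ ^ 2 := by
    rw [integral_add I1 (I0.const_mul _), integral_const_mul, aux_nsq, aux_nsq]
  have IJ : IntegrableOn (fun y => (δ+1/2) * (‖φ1 y‖^2 + c^2 * ‖φ y‖^2)
      - (F y * (starRingEnd ℂ) (φ y)).re) (Set.Icc (-1:ℝ) 1) := (IS.const_mul (δ+1/2)).sub IFp
  refine ⟨?_, ?_, ?_⟩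
  · have := integral_mono (μ := volume.restrict (Set.Icc (-1:ℝ) 1))
      (IS.const_mul (c^2)) (Iw.add (IH.const_mul (2 * c^2)))
      (fun y => by
        have := aux_pt1 (φ y) (φ1 y) (φ2 y) c
        rw [← hw y] at this
        exact this)
    simp only [Pi.add_apply] at this
    rw [integral_add Iw (IH.const_mul _), integral_const_mul, integral_const_mul, eS, iH,
      ← aux_nsq] at this
    linarith
  · have := integral_mono (μ := volume.restrict (Set.Icc (-1:ℝ) 1))
      (Iw.const_mul ν) (IJ.add IG)
      (fun y => by
        have := aux_pt2 (φ y) (φ1 y) (φ2 y) (w y) (w2 y) c ν δ y lam (hw y)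
        rw [← hF y] at this
        exact this)
    simp only [Pi.add_apply, Pi.sub_apply] at this
    rw [integral_add IJ IG, integral_sub (IS.const_mul (δ+1/2)) IFp,
      integral_const_mul, integral_const_mul, eS, iG, ← aux_nsq, ← hre] at this
    linarith
  · intro t ht
    have := integral_mono (μ := volume.restrict (Set.Icc (-1:ℝ) 1))
      IFp.neg ((IF.const_mul (1 / (2 * t))).add (I0.const_mul (t/2)))
      (fun y => aux_pt3 (F y) (φ y) t ht)
    simp only [Pi.add_apply, Pi.neg_apply] at this
    rw [integral_add (IF.const_mul _) (I0.const_mul _), integral_neg,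
      integral_const_mul, integral_const_mul, ← aux_nsq, ← aux_nsq, ← hre] at this
    exact this

/-- Resolvent estimates with non-slip boundary condition in the regime `ν k² ≥ 1`. -/
theorem statement9 :
    ∃ ε₀ C : ℝ, 0 < ε₀ ∧ ε₀ < 1 ∧ 0 < C ∧
      ∀ (ν : ℝ) (k : ℤ) (ε lam : ℝ) (φ w F : ℝ → ℂ),
        0 < ν → ν ≤ 1 → 1 ≤ |k| → 1 ≤ ν * (k:ℝ)^2 → 0 ≤ ε → ε ≤ ε₀ →
        ContDiff ℝ 4 φ →
        φ (-1) = 0 → φ 1 = 0 → deriv φ (-1) = 0 → deriv φ 1 = 0 →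
        (w = fun y : ℝ => deriv (deriv φ) y - (k:ℂ)^2 * φ y) →
        (F = fun y : ℝ => -(ν : ℂ) * (deriv (deriv w) y - (k:ℂ)^2 * w y)
            + Complex.I * (k:ℂ) * ((y:ℂ) - (lam:ℂ)) * w y
            - ((ε * ν ^ ((1:ℝ)/3) * |(k:ℝ)| ^ ((2:ℝ)/3) : ℝ) : ℂ) * w y) →
        (ν * (k:ℝ)^2 * nL2 w ≤ C * nL2 F
          ∧ ν ^ ((5:ℝ)/12) * |(k:ℝ)| ^ ((5:ℝ)/6) * nL2 w ≤ C * nL2 F)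
        ∧ ∀ M : ℝ, 0 ≤ M → Dominates F M →
            ν * (k:ℝ)^2 *
                ((nL2 (deriv φ) ^ 2 + (k:ℝ)^2 * nL2 φ ^ 2) ^ ((1:ℝ)/2)) ≤ C * M
            ∧ ν * |(k:ℝ)| * nL2 w ≤ C * M := by
  refine ⟨1/4, 4, by norm_num, by norm_num, by norm_num, ?_⟩
  intro ν k ε lam φ w F hν hν1 hk hνk hε hε0 hφ b1 b2 b3 b4 hw hF
  have hD : ∀ (f : ℝ → ℂ) (n : ℕ), ContDiff ℝ ((n+1 : ℕ) : WithTop ℕ∞) f →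
      (∀ y, HasDerivAt f (deriv f y) y) ∧ ContDiff ℝ (n : WithTop ℕ∞) (deriv f) := by
    intro f n hf
    refine ⟨fun y => (hf.differentiable (by simp) y).hasDerivAt, ?_⟩
    have : ContDiff ℝ ((n : WithTop ℕ∞) + 1) f := by exact_mod_cast hf
    exact (contDiff_succ_iff_deriv.1 this).2.2
  obtain ⟨h0, hφ1⟩ := hD φ 3 (by exact_mod_cast hφ)
  obtain ⟨h1, hφ2⟩ := hD _ 2 hφ1
  have hw' : ContDiff ℝ ((2:ℕ) : WithTop ℕ∞) w := by
    rw [hw]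
    exact hφ2.sub (contDiff_const.mul (hφ.of_le (by norm_cast)))
  obtain ⟨hw0, hww1⟩ := hD w 1 hw'
  obtain ⟨hw1, hww2⟩ := hD _ 0 hww1
  set c : ℝ := (k:ℝ) with hc
  have hkc : (k:ℂ) = (c:ℂ) := by simp [hc]
  set δ : ℝ := ε * ν ^ ((1:ℝ)/3) * |c| ^ ((2:ℝ)/3) with hδ
  obtain ⟨e1, e2, e3⟩ := aux_core ν c δ lam φ (deriv φ) (deriv (deriv φ)) w (deriv w)
    (deriv (deriv w)) F h0 h1 hw0 hw1 hφ2.continuous hww2.continuous b1 b2 b3 b4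
    (fun y => by rw [hw, hkc]) (fun y => by rw [hF, hkc])
  have hc1 : 1 ≤ |c| := by rw [hc]; exact_mod_cast hk
  have hc2 : 1 ≤ c^2 := by rw [← sq_abs]; nlinarith
  set Q := ν * c^2 with hQ
  have hpow : ∀ s : ℝ, ν ^ s * |c| ^ (2*s) = Q ^ s := by
    intro s
    rw [hQ, Real.mul_rpow hν.le (sq_nonneg c), ← sq_abs, ← Real.rpow_natCast,
      ← Real.rpow_mul (abs_nonneg c)]
    norm_num
  have hle : ∀ s : ℝ, s ≤ 1 → Q ^ s ≤ Q := by
    intro s hs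
    simpa using Real.rpow_le_rpow_of_exponent_le hνk hs
  have hδQ : δ ≤ 1/4 * Q := by
    have a1 := hpow (1/3)
    rw [show (2:ℝ) * (1/3) = 2/3 by norm_num] at a1
    rw [hδ, mul_assoc, a1]
    exact mul_le_mul hε0 (hle _ (by norm_num)) (by positivity) (by norm_num)
  set S := nL2 (deriv φ) ^ 2 + c^2 * nL2 φ ^ 2 with hS
  have hS0 : 0 ≤ S := by positivity
  have hQS : Q * S ≤ ν * nL2 w ^ 2 := by
    rw [hQ, mul_assoc]; exact mul_le_mul_of_nonneg_left e1 hν.le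
  have hmain : ν * nL2 w ^ 2 ≤ 4 * -(innI F φ).re := by
    have : (δ + 1/2) * S ≤ (3/4) * Q * S := mul_le_mul_of_nonneg_right (by linarith) hS0
    linarith
  have nw := aux_nn w
  have nF := aux_nn F
  have hA : c^2 * c^2 * nL2 φ ^ 2 ≤ nL2 w ^ 2 := by
    have : 0 ≤ c^2 * nL2 (deriv φ)^2 := by positivity
    rw [hS] at e1; linarith
  have hi : Q * nL2 w ≤ 4 * nL2 F := by
    have hc0 : 0 < c^2 := by linarith
    have ht := e3 (ν * c^2 * c^2 / 4) (by positivity)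
    have h5 : ν * (c^2 * c^2 * nL2 φ ^ 2) ≤ ν * nL2 w ^ 2 := mul_le_mul_of_nonneg_left hA hν.le
    have h6 : ν * nL2 w ^ 2 ≤ 16 * (1 / (ν * c^2 * c^2) * nL2 F ^ 2) := by
      have : 1 / (2 * (ν * c^2 * c^2 / 4)) = 2 * (1 / (ν * c^2 * c^2)) := by
        field_simp; norm_num
      rw [this] at ht
      linarith
    have h7 : (Q * nL2 w)^2 ≤ (4 * nL2 F)^2 := by
      have := mul_le_mul_of_nonneg_left h6 (show 0 ≤ ν * c^2 * c^2 by positivity)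
      calc (Q * nL2 w)^2 = ν * c^2 * c^2 * (ν * nL2 w ^ 2) := by rw [hQ]; ring
        _ ≤ _ := this
        _ = _ := by
          have hcn : c ≠ 0 := by rintro h; rw [h] at hc0; norm_num at hc0
          field_simp; ring
    exact (sq_le_sq₀ (by positivity) (by positivity)).1 h7
  refine ⟨⟨hi, ?_⟩, ?_⟩
  · refine le_trans ?_ hi
    have a1 := hpow (5/12)
    rw [show (2:ℝ) * (5/12) = 5/6 by norm_num] at a1
    rw [a1]
    exact mul_le_mul_of_nonneg_right (hle _ (by norm_num)) nw
  · intro M hM hdom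
    have d1 := hdom φ (hφ.of_le (by norm_cast)) b1 b2
    rw [← Real.sqrt_eq_rpow] at d1 ⊢
    have d2 : √(nL2 φ ^ 2 + nL2 (deriv φ) ^ 2) ≤ √S := by
      apply Real.sqrt_le_sqrt
      have := mul_le_mul_of_nonneg_right hc2 (sq_nonneg (nL2 φ))
      rw [hS]; linarith
    have d3 : |c| * √S ≤ nL2 w := by
      apply abs_le_of_sq_le_sq' _ nw |>.2
      rw [mul_pow, sq_abs, Real.sq_sqrt hS0]; exact e1
    have d4 : -(innI F φ).re ≤ M * √S :=
      ((neg_le_abs _).trans (Complex.abs_re_le_norm _)).trans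
        (d1.trans (mul_le_mul_of_nonneg_left d2 hM))
    have d5 : ν * |c| * nL2 w ≤ 4 * M := by
      rcases nw.eq_or_lt with h | h
      · rw [← h]; linarith
      · have : (ν * |c| * nL2 w) * nL2 w ≤ (4 * M) * nL2 w := by
          calc _ = |c| * (ν * nL2 w ^ 2) := by ring
            _ ≤ |c| * (4 * (M * √S)) :=
              mul_le_mul_of_nonneg_left (by linarith) (abs_nonneg c)
            _ = 4 * M * (|c| * √S) := by ring
            _ ≤ _ := mul_le_mul_of_nonneg_left d3 (by linarith)
        exact le_of_mul_le_mul_right this h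
    refine ⟨le_trans ?_ d5, d5⟩
    calc Q * √S = ν * |c| * (|c| * √S) := by rw [hQ, ← sq_abs]; ring
      _ ≤ _ := mul_le_mul_of_nonneg_left d3 (by positivity)
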